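/- arXiv:1511.04190 — 14 statements merged into one kernel-verified Lean document; each statement's English description precedes it below -/
import Mathlib

section
/- Let G be a 3-regular simple graph on vertex set {1,…,n} with edge set E, and let W ⊆ {1,…,n} be a vertex cover of G with |W| = k. Identify candidates with vertices and, for each i ∈ {1,…,n}, define the vote S_i = { j : {i,j} ∈ E }. Set the committee C* = W and the set of non-outlier indices I = {1,…,n} ∖ W. Then Σ_{i∈I} |C* ∖ S_i| = (n−k)(k−3) (as an equality of integers). -/
/-- For a 3-regular graph `G` on vertices `Fin n`, a vertex cover `W` of
size `k`, votes `S i = neighborFinset i`, committee `W`, and non-outliers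
`I = univ \ W`, the disapproval score `∑_{i ∈ I} |W \ S i|` equals `(n - k)(k - 3)`. -/
theorem stmt_1 (n k : ℕ) (G : SimpleGraph (Fin n)) [DecidableRel G.Adj]
    (hreg : G.IsRegularOfDegree 3)
    (W : Finset (Fin n)) (hW : W.card = k)
    (hcover : ∀ u v : Fin n, G.Adj u v → u ∈ W ∨ v ∈ W) :
    (∑ i ∈ Finset.univ \ W, ((W \ G.neighborFinset i).card : ℤ))
      = ((n : ℤ) - (k : ℤ)) * ((k : ℤ) - 3) := by
  have h : ∀ i ∈ Finset.univ \ W,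
      ((W \ G.neighborFinset i).card : ℤ) = (k : ℤ) - 3 := by
    intro i hi
    have hiW : i ∉ W := (Finset.mem_sdiff.mp hi).2
    have hsub : G.neighborFinset i ⊆ W := by
      intro j hj
      rw [SimpleGraph.mem_neighborFinset] at hj
      exact (hcover i j hj).resolve_left hiW
    have h1 := Finset.card_sdiff_add_card_eq_card hsub
    have h2 : (G.neighborFinset i).card = 3 := by
      rw [SimpleGraph.card_neighborFinset_eq_degree]
      exact hreg i
    omega
  have hc : (Finset.univ \ W).card + W.card = n := by
    rw [Finset.card_sdiff_add_card_eq_card (Finset.subset_univ W)]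
    simp
  have hc' : ((Finset.univ \ W).card : ℤ) = (n : ℤ) - k := by omega
  rw [Finset.sum_congr rfl h, Finset.sum_const, nsmul_eq_mul, hc']
end

section
/- Let G be a 3-regular simple graph on vertex set {1,…,n} with edge set E, and let W ⊆ {1,…,n} be a vertex cover of G with |W| = k. Identify candidates with vertices and, for each i ∈ {1,…,n}, define the vote S_i = { j : {i,j} ∈ E }. Set the committee C* = W and the set of non-outlier indices I = {1,…,n} ∖ W. Then Σ_{i∈I} (|C* ∖ S_i| − |C* ∩ S_i|) = (n−k)(k−6) (as an equality of integers). -/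
/-- For a 3-regular graph `G` on vertices `Fin n`, a vertex cover `W` of
size `k`, votes `S i = neighborFinset i`, committee `W`, and non-outliers
`I = univ \ W`, the net disapproval score `∑_{i ∈ I} (|W \ S i| - |W ∩ S i|)`
equals `(n - k)(k - 6)`. -/
theorem stmt_2 (n k : ℕ) (G : SimpleGraph (Fin n)) [DecidableRel G.Adj]
    (hreg : G.IsRegularOfDegree 3)
    (W : Finset (Fin n)) (hW : W.card = k)
    (hcover : ∀ u v : Fin n, G.Adj u v → u ∈ W ∨ v ∈ W) :
    (∑ i ∈ Finset.univ \ W,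
        (((W \ G.neighborFinset i).card : ℤ) - ((W ∩ G.neighborFinset i).card : ℤ)))
      = ((n : ℤ) - (k : ℤ)) * ((k : ℤ) - 6) := by
  have key : ∀ i ∈ Finset.univ \ W,
      (((W \ G.neighborFinset i).card : ℤ) - ((W ∩ G.neighborFinset i).card : ℤ))
        = (k : ℤ) - 6 := by
    intro i hi
    have hi' : i ∉ W := (Finset.mem_sdiff.mp hi).2
    have hsub : G.neighborFinset i ⊆ W := by
      intro v hv
      rw [SimpleGraph.mem_neighborFinset] at hv
      exact (hcover i v hv).resolve_left hi'
    have h3 : (G.neighborFinset i).card = 3 := by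
      rw [SimpleGraph.card_neighborFinset_eq_degree]
      exact hreg i
    have h1 := Finset.card_sdiff_add_card_inter W (G.neighborFinset i)
    have h2 : W ∩ G.neighborFinset i = G.neighborFinset i :=
      Finset.inter_eq_right.mpr hsub
    rw [h2] at h1 ⊢
    omega
  rw [Finset.sum_congr rfl key, Finset.sum_const, nsmul_eq_mul]
  have hc := Finset.card_sdiff_add_card_eq_card (Finset.subset_univ W)
  rw [Finset.card_univ, Fintype.card_fin, hW] at hc
  have hc' : ((Finset.univ \ W).card : ℤ) = (n : ℤ) - (k : ℤ) := by omega
  rw [hc']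
end

section
/- Let G be a d-regular simple graph with vertex set {1,…,n} and edges e_1,…,e_m (each edge a 2-element set of vertices), and let k ≤ n. Identify candidates with vertices and, for each edge index i ∈ {1,…,m}, define the vote S_i = { j ∈ {1,…,n} : j ∉ e_i }. Then G contains a clique of size k if and only if there exist a committee C* ⊆ {1,…,n} with |C*| = n−k and an index set I ⊆ {1,…,m} with |I| ≥ k(k−1)/2 such that Σ_{i∈I} |C* Δ S_i| ≤ (k−2)·k(k−1)/2 (as integers). -/
open scoped symmDiff

theorem score_aux {n : ℕ} (W e : Finset (Fin n)) (he : e.card = 2) :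
    (((Wᶜ ∆ eᶜ).card : ℕ) : ℤ) = (W.card : ℤ) + 2 - 2 * ((e ∩ W).card : ℤ) := by
  have h0 : Wᶜ ∆ eᶜ = (W \ e) ∪ (e \ W) := by
    ext x
    simp only [Finset.mem_symmDiff, Finset.mem_compl, Finset.mem_union, Finset.mem_sdiff]
    tauto
  have hd : Disjoint (W \ e) (e \ W) := disjoint_sdiff_sdiff
  rw [h0, Finset.card_union_of_disjoint hd]
  have h1 := Finset.card_sdiff_add_card_inter W e
  have h2 := Finset.card_sdiff_add_card_inter e W
  rw [Finset.inter_comm W e] at h1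
  omega

/-- `G` is a `d`-regular simple graph on vertices `Fin n`, given by its
list of distinct edges `e 1, …, e m` (each a 2-element set of vertices). Candidates
are vertices, and the vote for edge index `i` is the complement `(e i)ᶜ`. Then `G`
has a clique of size `k` iff there are a committee `C` of size `n - k` and an index
set `I` of size at least `k(k-1)/2` with `∑_{i ∈ I} |C ∆ (e i)ᶜ| ≤ (k-2)·k(k-1)/2`. -/
theorem stmt_3 (n m d k : ℕ) (hk : k ≤ n)
    (e : Fin m → Finset (Fin n))
    (he2 : ∀ i, (e i).card = 2)
    (hinj : Function.Injective e)
    (hreg : ∀ v : Fin n, (Finset.univ.filter fun i => v ∈ e i).card = d) :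
    (∃ W : Finset (Fin n), W.card = k ∧
        ∀ u ∈ W, ∀ v ∈ W, u ≠ v → ∃ i, e i = {u, v})
    ↔ ∃ (C : Finset (Fin n)) (I : Finset (Fin m)),
        C.card = n - k ∧ k * (k - 1) / 2 ≤ I.card ∧
        (∑ i ∈ I, ((C ∆ (e i)ᶜ).card : ℤ))
          ≤ ((k : ℤ) - 2) * ((k * (k - 1) / 2 : ℕ) : ℤ) := by
  constructor
  · rintro ⟨W, hW, hcl⟩
    have himg : (Finset.univ.filter fun i => e i ⊆ W).image e = W.powersetCard 2 := by
      ext s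
      simp only [Finset.mem_image, Finset.mem_filter, Finset.mem_univ, true_and,
        Finset.mem_powersetCard]
      constructor
      · rintro ⟨i, hi, rfl⟩
        exact ⟨hi, he2 i⟩
      · rintro ⟨hs, hc⟩
        obtain ⟨u, v, huv, rfl⟩ := Finset.card_eq_two.1 hc
        obtain ⟨i, hi⟩ := hcl u (hs (by simp)) v (hs (by simp)) huv
        exact ⟨i, hi ▸ hs, hi⟩
    have hcard : (Finset.univ.filter fun i => e i ⊆ W).card = k * (k - 1) / 2 := by
      rw [← Finset.card_image_of_injective _ hinj, himg, Finset.card_powersetCard, hW,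
        Nat.choose_two_right]
    refine ⟨Wᶜ, Finset.univ.filter fun i => e i ⊆ W, ?_, hcard.ge, ?_⟩
    · rw [Finset.card_compl, hW, Fintype.card_fin]
    · rw [Finset.sum_congr rfl (g := fun _ => (k : ℤ) - 2), Finset.sum_const, hcard,
        nsmul_eq_mul, mul_comm]
      intro i hi
      have hi' : e i ⊆ W := (Finset.mem_filter.1 hi).2
      rw [score_aux W (e i) (he2 i), Finset.inter_eq_left.2 hi', he2 i, hW]
      push_cast
      ring
  · rintro ⟨C, I, hC, hI, hsum⟩
    have hW : Cᶜ.card = k := by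
      rw [Finset.card_compl, hC, Fintype.card_fin]
      omega
    refine ⟨Cᶜ, hW, ?_⟩
    intro u hu v hv huv
    have hk2 : 2 ≤ k := by
      rw [← hW]
      exact Finset.one_lt_card.2 ⟨u, hu, v, hv, huv⟩
    have hsc : ∀ i, ((C ∆ (e i)ᶜ).card : ℤ) = (k : ℤ) + 2 - 2 * ((e i ∩ Cᶜ).card : ℤ) := by
      intro i
      have h := score_aux Cᶜ (e i) (he2 i)
      rwa [compl_compl, hW] at h
    have hle : ∀ i, (e i ∩ Cᶜ).card ≤ 2 := fun i =>
      (Finset.card_le_card Finset.inter_subset_left).trans (he2 i).le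
    have hsub : ∀ i ∈ I, e i ⊆ Cᶜ := by
      intro i hi
      by_contra hn
      have hlt : (e i ∩ Cᶜ).card < 2 := by
        refine lt_of_le_of_ne (hle i) fun h => hn ?_
        exact Finset.inter_eq_left.1
          (Finset.eq_of_subset_of_card_le Finset.inter_subset_left (by rw [h, he2 i]))
      have h1 : ∑ _j ∈ I, ((k : ℤ) - 2) < ∑ j ∈ I, ((C ∆ (e j)ᶜ).card : ℤ) := by
        apply Finset.sum_lt_sum
        · intro j _
          have := hle j
          rw [hsc j]
          omega
        · refine ⟨i, hi, ?_⟩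
          rw [hsc i]
          omega
      rw [Finset.sum_const, nsmul_eq_mul] at h1
      have h2 : ((k * (k - 1) / 2 : ℕ) : ℤ) ≤ (I.card : ℤ) := by exact_mod_cast hI
      have h3 : (0 : ℤ) ≤ (k : ℤ) - 2 := by omega
      have h4 := mul_le_mul_of_nonneg_left h2 h3
      linarith [mul_comm (I.card : ℤ) ((k : ℤ) - 2)]
    have himg : I.image e = Cᶜ.powersetCard 2 := by
      apply Finset.eq_of_subset_of_card_le
      · intro s hs
        obtain ⟨i, hi, rfl⟩ := Finset.mem_image.1 hs
        exact Finset.mem_powersetCard.2 ⟨hsub i hi, he2 i⟩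
      · rw [Finset.card_image_of_injective _ hinj, Finset.card_powersetCard, hW,
          Nat.choose_two_right]
        exact hI
    have hmem : ({u, v} : Finset (Fin n)) ∈ I.image e := by
      rw [himg, Finset.mem_powersetCard]
      refine ⟨?_, Finset.card_pair huv⟩
      intro x hx
      rcases Finset.mem_insert.1 hx with rfl | hx
      · exact hu
      · rw [Finset.mem_singleton.1 hx]
        exact hv
    obtain ⟨i, _, hi⟩ := Finset.mem_image.1 hmem
    exact ⟨i, hi⟩
end

section
/- Let G be a d-regular simple graph with vertex set {1,…,n} and edges e_1,…,e_m (each edge a 2-element set of vertices), and let k ≤ n. Identify candidates with vertices and, for each edge index i ∈ {1,…,m}, define the vote S_i = { j ∈ {1,…,n} : j ∉ e_i }. Then G contains a clique of size k if and only if there exist a committee C* ⊆ {1,…,n} with |C*| = n−k and an index set I ⊆ {1,…,m} with |I| ≥ k(k−1)/2 such that Σ_{i∈I} |C* ∖ S_i| = 0. -/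
/-- `G` is a `d`-regular simple graph on vertices `Fin n`, given by its
list of distinct edges `e 1, …, e m` (each a 2-element set of vertices). Candidates
are vertices, and the vote for edge index `i` is the complement `(e i)ᶜ`. Then `G`
has a clique of size `k` iff there are a committee `C` of size `n - k` and an index
set `I` of size at least `k(k-1)/2` with disapproval score `∑_{i ∈ I} |C \ (e i)ᶜ| = 0`. -/
theorem stmt_4 (n m d k : ℕ) (hk : k ≤ n)
    (e : Fin m → Finset (Fin n))
    (he2 : ∀ i, (e i).card = 2)
    (hinj : Function.Injective e)
    (hreg : ∀ v : Fin n, (Finset.univ.filter fun i => v ∈ e i).card = d) :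
    (∃ W : Finset (Fin n), W.card = k ∧
        ∀ u ∈ W, ∀ v ∈ W, u ≠ v → ∃ i, e i = {u, v})
    ↔ ∃ (C : Finset (Fin n)) (I : Finset (Fin m)),
        C.card = n - k ∧ k * (k - 1) / 2 ≤ I.card ∧
        (∑ i ∈ I, (C \ (e i)ᶜ).card) = 0 := by
  have key : ∀ (C : Finset (Fin n)) (i : Fin m),
      (C \ (e i)ᶜ).card = 0 ↔ e i ⊆ Cᶜ := by
    intro C i
    rw [Finset.card_eq_zero, Finset.sdiff_eq_empty_iff_subset]
    constructor
    · intro h x hx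
      rw [Finset.mem_compl]
      intro hc
      exact (Finset.mem_compl.mp (h hc)) hx
    · intro h x hx
      rw [Finset.mem_compl]
      intro hc
      exact (Finset.mem_compl.mp (h hc)) hx
  constructor
  · rintro ⟨W, hW, hcl⟩
    refine ⟨Wᶜ, Finset.univ.filter fun i => e i ⊆ W, ?_, ?_, ?_⟩
    · rw [Finset.card_compl, hW, Fintype.card_fin]
    · have hsub : Finset.powersetCard 2 W ⊆
          (Finset.univ.filter fun i => e i ⊆ W).image e := by
        intro s hs
        obtain ⟨hsW, hs2⟩ := Finset.mem_powersetCard.mp hs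
        obtain ⟨u, v, huv, rfl⟩ := Finset.card_eq_two.mp hs2
        obtain ⟨i, hi⟩ := hcl u (hsW (by simp)) v (hsW (by simp)) huv
        refine Finset.mem_image.mpr ⟨i, ?_, hi⟩
        simp only [Finset.mem_filter, Finset.mem_univ, true_and]
        rw [hi]
        exact hsW
      have h := (Finset.card_le_card hsub).trans Finset.card_image_le
      rwa [Finset.card_powersetCard, hW, Nat.choose_two_right] at h
    · refine Finset.sum_eq_zero fun i hi => (key _ i).mpr ?_
      rw [compl_compl]
      exact (Finset.mem_filter.mp hi).2
  · rintro ⟨C, I, hC, hI, hsum⟩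
    have hW : Cᶜ.card = k := by
      rw [Finset.card_compl, hC, Fintype.card_fin]
      omega
    refine ⟨Cᶜ, hW, ?_⟩
    have hsub : I.image e ⊆ Finset.powersetCard 2 Cᶜ := by
      intro s hs
      obtain ⟨i, hi, rfl⟩ := Finset.mem_image.mp hs
      exact Finset.mem_powersetCard.mpr
        ⟨(key C i).mp (Finset.sum_eq_zero_iff.mp hsum i hi), he2 i⟩
    have heq : I.image e = Finset.powersetCard 2 Cᶜ := by
      apply Finset.eq_of_subset_of_card_le hsub
      rw [Finset.card_powersetCard, hW, Nat.choose_two_right,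
        Finset.card_image_of_injective _ hinj]
      exact hI
    intro u hu v hv huv
    have hmem : ({u, v} : Finset (Fin n)) ∈ I.image e := by
      rw [heq, Finset.mem_powersetCard]
      refine ⟨?_, Finset.card_pair huv⟩
      intro x hx
      rcases Finset.mem_insert.mp hx with rfl | hx
      · exact hu
      · rw [Finset.mem_singleton.mp hx]
        exact hv
    obtain ⟨i, _, hi⟩ := Finset.mem_image.mp hmem
    exact ⟨i, hi⟩
end

section
/- Let G be a simple graph with vertex set {1,…,n} and edges e_1,…,e_m (each edge a 2-element set of vertices), and let k ≤ n. Identify candidates with vertices and, for each edge index i ∈ {1,…,m}, define the vote S_i = e_i (so every vote approves exactly two candidates). Then G contains a clique of size k if and only if there exist a committee C* ⊆ {1,…,n} with |C*| = k and an index set I ⊆ {1,…,m} with |I| ≥ k(k−1)/2 such that Σ_{i∈I} |C* Δ S_i| ≤ (k−2)·k(k−1)/2 (as integers). -/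
open scoped symmDiff

theorem symm_card_aux {α : Type*} [DecidableEq α] (C S : Finset α) :
    (C ∆ S).card + 2 * (S ∩ C).card = C.card + S.card := by
  have h1 : (C ∆ S).card = (C \ S).card + (S \ C).card := by
    rw [symmDiff_def, Finset.sup_eq_union, Finset.card_union_of_disjoint]
    exact disjoint_sdiff_sdiff
  have h2 := Finset.card_sdiff_add_card_inter C S
  have h3 := Finset.card_sdiff_add_card_inter S C
  rw [Finset.inter_comm C S] at h2
  omega

/-- `G` is a simple graph on vertices `Fin n`, given by its list of
distinct edges `e 1, …, e m` (each a 2-element set of vertices). Candidates are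
vertices and the vote for edge index `i` is `e i` itself. Then `G` has a clique of
size `k` iff there are a committee `C` of size `k` and an index set `I` of size at
least `k(k-1)/2` with minisum score `∑_{i ∈ I} |C ∆ e i| ≤ (k-2)·k(k-1)/2`. -/
theorem stmt_5 (n m k : ℕ) (hk : k ≤ n)
    (e : Fin m → Finset (Fin n))
    (he2 : ∀ i, (e i).card = 2)
    (hinj : Function.Injective e) :
    (∃ W : Finset (Fin n), W.card = k ∧
        ∀ u ∈ W, ∀ v ∈ W, u ≠ v → ∃ i, e i = {u, v})
    ↔ ∃ (C : Finset (Fin n)) (I : Finset (Fin m)),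
        C.card = k ∧ k * (k - 1) / 2 ≤ I.card ∧
        (∑ i ∈ I, ((C ∆ e i).card : ℤ))
          ≤ ((k : ℤ) - 2) * ((k * (k - 1) / 2 : ℕ) : ℤ) := by
  classical
  have score : ∀ C : Finset (Fin n), C.card = k → ∀ i,
      ((C ∆ e i).card : ℤ) = k + 2 - 2 * ((e i ∩ C).card : ℤ) := by
    intro C hC i
    have := symm_card_aux C (e i)
    rw [he2 i, hC] at this
    omega
  have hsub : ∀ C : Finset (Fin n), ∀ i, ¬ e i ⊆ C → (e i ∩ C).card ≤ 1 := by
    intro C i h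
    have h1 : (e i ∩ C) ⊂ e i := by
      refine Finset.ssubset_iff_subset_ne.2 ⟨Finset.inter_subset_left, ?_⟩
      intro h2
      exact h (Finset.inter_eq_left.1 h2)
    have := Finset.card_lt_card h1
    rw [he2 i] at this
    omega
  rw [← Nat.choose_two_right]
  constructor
  · rintro ⟨W, hW, hcl⟩
    have himg : (Finset.univ.filter (fun i => e i ⊆ W)).image e = W.powersetCard 2 := by
      ext s
      simp only [Finset.mem_image, Finset.mem_filter, Finset.mem_univ, true_and,
        Finset.mem_powersetCard]
      constructor
      · rintro ⟨i, hi, rfl⟩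
        exact ⟨hi, he2 i⟩
      · rintro ⟨hs, hc⟩
        obtain ⟨u, v, huv, rfl⟩ := Finset.card_eq_two.1 hc
        obtain ⟨i, hi⟩ := hcl u (hs (by simp)) v (hs (by simp)) huv
        exact ⟨i, hi ▸ hs, hi⟩
    have hcard : (Finset.univ.filter (fun i => e i ⊆ W)).card = k.choose 2 := by
      rw [← Finset.card_image_of_injective _ hinj, himg, Finset.card_powersetCard, hW]
    refine ⟨W, Finset.univ.filter (fun i => e i ⊆ W), hW, hcard.ge, ?_⟩
    have : ∀ i ∈ Finset.univ.filter (fun i => e i ⊆ W),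
        ((W ∆ e i).card : ℤ) = (k : ℤ) - 2 := by
      intro i hi
      rw [score W hW i, Finset.inter_eq_left.2 (Finset.mem_filter.1 hi).2, he2 i]
      push_cast
      ring
    rw [Finset.sum_congr rfl this, Finset.sum_const, hcard, nsmul_eq_mul, mul_comm]
  · rintro ⟨C, I, hC, hI, hsum⟩
    refine ⟨C, hC, ?_⟩
    intro u hu v hv huv
    have hpair : ({u, v} : Finset (Fin n)) ⊆ C := by
      intro x hx
      simp only [Finset.mem_insert, Finset.mem_singleton] at hx
      rcases hx with rfl | rfl <;> assumption
    have hk2 : 2 ≤ k := by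
      have := Finset.card_le_card hpair
      rwa [Finset.card_pair huv, hC] at this
    have hge : ∀ i, (k : ℤ) - 2 ≤ ((C ∆ e i).card : ℤ) := by
      intro i
      rw [score C hC i]
      have := Finset.card_le_card (Finset.inter_subset_left : e i ∩ C ⊆ e i)
      rw [he2 i] at this
      omega
    have hconst : ((k : ℤ) - 2) * (k.choose 2 : ℕ) ≤ ∑ i ∈ I, ((k : ℤ) - 2) := by
      rw [Finset.sum_const, nsmul_eq_mul, mul_comm]
      have : ((k.choose 2 : ℕ) : ℤ) ≤ I.card := by exact_mod_cast hI
      exact mul_le_mul_of_nonneg_right this (by omega)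
    have hall : ∀ i ∈ I, e i ⊆ C := by
      intro i hi
      by_contra hn
      have hlt : ∑ i ∈ I, ((k : ℤ) - 2) < ∑ i ∈ I, ((C ∆ e i).card : ℤ) := by
        refine Finset.sum_lt_sum (fun j _ => hge j) ⟨i, hi, ?_⟩
        rw [score C hC i]
        have := hsub C i hn
        omega
      linarith
    have himg : I.image e = C.powersetCard 2 := by
      apply Finset.eq_of_subset_of_card_le
      · intro s hs
        obtain ⟨i, hi, rfl⟩ := Finset.mem_image.1 hs
        exact Finset.mem_powersetCard.2 ⟨hall i hi, he2 i⟩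
      · rw [Finset.card_image_of_injective _ hinj, Finset.card_powersetCard, hC]
        exact hI
    have hm : ({u, v} : Finset (Fin n)) ∈ I.image e := by
      rw [himg]
      exact Finset.mem_powersetCard.2 ⟨hpair, Finset.card_pair huv⟩
    obtain ⟨i, _, hi⟩ := Finset.mem_image.1 hm
    exact ⟨i, hi⟩
end

section
/- Let G be a simple graph with vertex set {1,…,n} and edges e_1,…,e_m (each edge a 2-element set of vertices), and let k ≤ n. Identify candidates with vertices and, for each edge index i ∈ {1,…,m}, define the vote S_i = e_i (so every vote approves exactly two candidates). Then G contains a clique of size k if and only if there exist a committee C* ⊆ {1,…,n} with |C*| = k and an index set I ⊆ {1,…,m} with |I| ≥ k(k−1)/2 such that Σ_{i∈I} |C* ∖ S_i| ≤ (k−2)·k(k−1)/2 (as integers). -/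
/-- `G` is a simple graph on vertices `Fin n`, given by its list of
distinct edges `e 1, …, e m` (each a 2-element set of vertices). Candidates are
vertices and the vote for edge index `i` is `e i` itself. Then `G` has a clique of
size `k` iff there are a committee `C` of size `k` and an index set `I` of size at
least `k(k-1)/2` with disapproval score `∑_{i ∈ I} |C \ e i| ≤ (k-2)·k(k-1)/2`. -/
theorem stmt_6 (n m k : ℕ) (hk : k ≤ n)
    (e : Fin m → Finset (Fin n))
    (he2 : ∀ i, (e i).card = 2)
    (hinj : Function.Injective e) :
    (∃ W : Finset (Fin n), W.card = k ∧
        ∀ u ∈ W, ∀ v ∈ W, u ≠ v → ∃ i, e i = {u, v})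
    ↔ ∃ (C : Finset (Fin n)) (I : Finset (Fin m)),
        C.card = k ∧ k * (k - 1) / 2 ≤ I.card ∧
        (∑ i ∈ I, ((C \ e i).card : ℤ))
          ≤ ((k : ℤ) - 2) * ((k * (k - 1) / 2 : ℕ) : ℤ) := by
  classical
  have hsub : ∀ (C : Finset (Fin n)) i, e i ⊆ C → ((C \ e i).card : ℤ) = (C.card : ℤ) - 2 := by
    intro C i h
    have h1 := Finset.card_sdiff_add_card_eq_card h
    have h2 := he2 i
    omega
  have hnsub : ∀ (C : Finset (Fin n)) i, ¬ e i ⊆ C → (C.card : ℤ) - 1 ≤ ((C \ e i).card : ℤ) := by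
    intro C i h
    have h1 := Finset.card_sdiff_add_card_inter C (e i)
    have h2 : (C ∩ e i).card < (e i).card := by
      apply Finset.card_lt_card
      refine ⟨Finset.inter_subset_right, fun h' => h (h'.trans Finset.inter_subset_left)⟩
    have h3 := he2 i
    omega
  constructor
  · rintro ⟨W, hW, hcl⟩
    have hcard : (Finset.univ.filter (fun i => e i ⊆ W)).card = k * (k - 1) / 2 := by
      rw [← Nat.choose_two_right, ← hW, ← Finset.card_powersetCard,
        ← Finset.card_image_of_injective _ hinj]
      congr 1
      ext s
      simp only [Finset.mem_image, Finset.mem_filter, Finset.mem_univ, true_and,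
        Finset.mem_powersetCard]
      constructor
      · rintro ⟨i, hi, rfl⟩
        exact ⟨hi, he2 i⟩
      · rintro ⟨hs, h2⟩
        obtain ⟨u, v, huv, rfl⟩ := Finset.card_eq_two.mp h2
        obtain ⟨i, hi⟩ := hcl u (hs (by simp)) v (hs (by simp)) huv
        exact ⟨i, hi ▸ hs, hi⟩
    refine ⟨W, Finset.univ.filter (fun i => e i ⊆ W), hW, hcard.ge, ?_⟩
    rw [Finset.sum_congr rfl (fun i hi => hsub W i (Finset.mem_filter.mp hi).2),
      Finset.sum_const, hcard, hW, nsmul_eq_mul, mul_comm]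
  · rintro ⟨C, I, hC, hI, hs⟩
    refine ⟨C, hC, ?_⟩
    intro u hu v hv huv
    have hk2 : 2 ≤ k := by
      rw [← hC, ← Finset.card_pair huv]
      apply Finset.card_le_card
      intro x hx
      simp only [Finset.mem_insert, Finset.mem_singleton] at hx
      rcases hx with rfl | rfl <;> assumption
    have hle : ∀ i ∈ I, (k : ℤ) - 2 ≤ ((C \ e i).card : ℤ) := by
      intro i _
      by_cases h : e i ⊆ C
      · have := hsub C i h
        omega
      · have := hnsub C i h
        omega
    have hIN : ((k : ℤ) - 2) * ((k * (k - 1) / 2 : ℕ) : ℤ) ≤ ((k : ℤ) - 2) * (I.card : ℤ) :=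
      mul_le_mul_of_nonneg_left (by exact_mod_cast hI) (by omega)
    have hall : ∀ i ∈ I, e i ⊆ C := by
      intro i hi
      by_contra h
      have h1 := hnsub C i h
      have h2 : ∑ _i ∈ I, ((k : ℤ) - 2) < ∑ i ∈ I, ((C \ e i).card : ℤ) :=
        Finset.sum_lt_sum hle ⟨i, hi, by omega⟩
      rw [Finset.sum_const, nsmul_eq_mul, mul_comm] at h2
      linarith
    have himg : I.image e = C.powersetCard 2 := by
      apply Finset.eq_of_subset_of_card_le
      · intro s hs
        obtain ⟨i, hi, rfl⟩ := Finset.mem_image.mp hs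
        exact Finset.mem_powersetCard.mpr ⟨hall i hi, he2 i⟩
      · rw [Finset.card_powersetCard, Finset.card_image_of_injective _ hinj, hC,
          Nat.choose_two_right]
        exact hI
    have hm : ({u, v} : Finset (Fin n)) ∈ I.image e := by
      rw [himg, Finset.mem_powersetCard]
      refine ⟨?_, Finset.card_pair huv⟩
      intro x hx
      simp only [Finset.mem_insert, Finset.mem_singleton] at hx
      rcases hx with rfl | rfl <;> assumption
    obtain ⟨i, _, hi⟩ := Finset.mem_image.mp hm
    exact ⟨i, hi⟩
end

section
/- Let G be a simple graph with vertex set {1,…,n} and edges e_1,…,e_m (each edge a 2-element set of vertices), and let k ≤ n. Identify candidates with vertices and, for each edge index i ∈ {1,…,m}, define the vote S_i = e_i (so every vote approves exactly two candidates). Then G contains a clique of size k if and only if there exist a committee C* ⊆ {1,…,n} with |C*| = k and an index set I ⊆ {1,…,m} with |I| ≥ k(k−1)/2 such that Σ_{i∈I} (|C* ∖ S_i| − |C* ∩ S_i|) ≤ (k−4)·k(k−1)/2 (as integers). -/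
/-- `G` is a simple graph on vertices `Fin n`, given by its list of
distinct edges `e 1, …, e m` (each a 2-element set of vertices). Candidates are
vertices and the vote for edge index `i` is `e i` itself. Then `G` has a clique of
size `k` iff there are a committee `C` of size `k` and an index set `I` of size at
least `k(k-1)/2` with net disapproval score
`∑_{i ∈ I} (|C \ e i| - |C ∩ e i|) ≤ (k-4)·k(k-1)/2`. -/
theorem stmt_7 (n m k : ℕ) (hk : k ≤ n)
    (e : Fin m → Finset (Fin n))
    (he2 : ∀ i, (e i).card = 2)
    (hinj : Function.Injective e) :
    (∃ W : Finset (Fin n), W.card = k ∧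
        ∀ u ∈ W, ∀ v ∈ W, u ≠ v → ∃ i, e i = {u, v})
    ↔ ∃ (C : Finset (Fin n)) (I : Finset (Fin m)),
        C.card = k ∧ k * (k - 1) / 2 ≤ I.card ∧
        (∑ i ∈ I, (((C \ e i).card : ℤ) - ((C ∩ e i).card : ℤ)))
          ≤ ((k : ℤ) - 4) * ((k * (k - 1) / 2 : ℕ) : ℤ) := by
  have hch : ∀ C : Finset (Fin n), C.card = k →
      (Finset.powersetCard 2 C).card = k * (k - 1) / 2 := by
    intro C hC
    rw [Finset.card_powersetCard, hC, Nat.choose_two_right]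
  have hadd : ∀ C : Finset (Fin n), C.card = k → ∀ i,
      (C \ e i).card + (C ∩ e i).card = k := by
    intro C hC i
    rw [Finset.card_sdiff_add_card_inter, hC]
  constructor
  · rintro ⟨W, hW, hcl⟩
    have himg : (Finset.univ.filter (fun i => e i ⊆ W)).image e = Finset.powersetCard 2 W := by
      ext s
      simp only [Finset.mem_image, Finset.mem_filter, Finset.mem_univ, true_and,
        Finset.mem_powersetCard]
      constructor
      · rintro ⟨i, hi, rfl⟩
        exact ⟨hi, he2 i⟩
      · rintro ⟨hs, hs2⟩
        obtain ⟨u, v, huv, rfl⟩ := Finset.card_eq_two.mp hs2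
        obtain ⟨i, hi⟩ := hcl u (hs (by simp)) v (hs (by simp)) huv
        exact ⟨i, hi ▸ hs, hi⟩
    have hcard : (Finset.univ.filter (fun i => e i ⊆ W)).card = k * (k - 1) / 2 := by
      rw [← hch W hW, ← himg, Finset.card_image_of_injective _ hinj]
    refine ⟨W, Finset.univ.filter (fun i => e i ⊆ W), hW, hcard.ge, ?_⟩
    rw [Finset.sum_congr rfl (g := fun _ => (k : ℤ) - 4)]
    · rw [Finset.sum_const, hcard, nsmul_eq_mul, mul_comm]
    · intro i hi
      have hi := (Finset.mem_filter.mp hi).2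
      have h1 := hadd W hW i
      have h2 : (W ∩ e i).card = 2 := by rw [Finset.inter_eq_right.mpr hi, he2]
      omega
  · rintro ⟨C, I, hC, hI, hsum⟩
    refine ⟨C, hC, ?_⟩
    intro u hu v hv huv
    have hk2 : 2 ≤ k := by
      rw [← hC, ← Finset.card_pair huv]
      apply Finset.card_le_card
      intro x hx
      simp only [Finset.mem_insert, Finset.mem_singleton] at hx
      rcases hx with rfl | rfl <;> assumption
    have hsub : (I.filter (fun i => e i ⊆ C)).image e ⊆ Finset.powersetCard 2 C := by
      intro s hs
      obtain ⟨i, hi, rfl⟩ := Finset.mem_image.mp hs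
      exact Finset.mem_powersetCard.mpr ⟨(Finset.mem_filter.mp hi).2, he2 i⟩
    have hA := Finset.card_image_of_injective (I.filter (fun i => e i ⊆ C)) hinj
    have hle := Finset.card_le_card hsub
    have hsplit := Finset.card_filter_add_card_filter_not (s := I) (fun i => e i ⊆ C)
    have hlow : ∑ i ∈ I, (if e i ⊆ C then (k : ℤ) - 4 else (k : ℤ) - 2) ≤
        ∑ i ∈ I, (((C \ e i).card : ℤ) - ((C ∩ e i).card : ℤ)) := by
      apply Finset.sum_le_sum
      intro i _
      have h1 := hadd C hC i
      have h2 : (C ∩ e i).card ≤ 2 := by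
        rw [← he2 i]; exact Finset.card_le_card Finset.inter_subset_right
      split_ifs with h
      · omega
      · have h3 : (C ∩ e i).card < 2 := by
          rw [← he2 i]
          apply Finset.card_lt_card
          refine ⟨Finset.inter_subset_right, fun hh => h (hh.trans Finset.inter_subset_left)⟩
        omega
    rw [Finset.sum_ite, Finset.sum_const, Finset.sum_const, nsmul_eq_mul, nsmul_eq_mul] at hlow
    rw [hA, hch C hC] at hle
    have hge : k * (k - 1) / 2 ≤ (I.filter (fun i => e i ⊆ C)).card := by
      generalize k * (k - 1) / 2 = K at *
      generalize (I.filter (fun i => e i ⊆ C)).card = a at *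
      generalize (I.filter (fun i => ¬ e i ⊆ C)).card = b at *
      by_contra! hlt
      have hb : (K : ℤ) ≤ a + b := by omega
      have hk2' : (0 : ℤ) ≤ (k : ℤ) - 2 := by omega
      have hlt' : (a : ℤ) < K := by exact_mod_cast hlt
      nlinarith [mul_nonneg hk2' (sub_nonneg.mpr hb)]
    have heq := Finset.eq_of_subset_of_card_le hsub (by rw [hA, hch C hC]; exact hge)
    have hmem : ({u, v} : Finset (Fin n)) ∈ Finset.powersetCard 2 C := by
      refine Finset.mem_powersetCard.mpr ⟨?_, Finset.card_pair huv⟩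
      intro x hx
      simp only [Finset.mem_insert, Finset.mem_singleton] at hx
      rcases hx with rfl | rfl <;> assumption
    rw [← heq] at hmem
    obtain ⟨i, _, hi⟩ := Finset.mem_image.mp hmem
    exact ⟨i, hi⟩
end

section
/- Let G be a d-regular simple graph with vertex set {1,…,n} and edges e_1,…,e_m, and let W be a clique of size k in G with Q the set of edges having both endpoints in W (so |Q| = k(k−1)/2). Identify candidates with edge indices and, for each vertex i ∈ {1,…,n}, define the vote S_i = { j ∈ {1,…,m} : i ∉ e_j }. Set the committee C* = { j : e_j ∈ Q } and the set of non-outlier indices I = { i : i ∉ W }. Then Σ_{i∈I} |C* Δ S_i| = (n−k)·(m − d − k(k−1)/2), and in particular Σ_{i∈I} |C* Δ S_i| ≤ (n−k)·(m − k(k−1)/2) (as integers). -/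
open scoped symmDiff

/-- `G` is a `d`-regular simple graph on vertices `Fin n`, given by its
list of distinct edges `e 1, …, e m`, and `W` is a clique of size `k`. Candidates are
edge indices; the vote of vertex `i` is `{j | i ∉ e j}`. Let `Q` (the committee) be
the set of indices of edges with both endpoints in `W` (so `|Q| = k(k-1)/2`), and let
the non-outliers be the vertices outside `W`. Then the minisum score equals
`(n-k)(m - d - k(k-1)/2)`, and in particular is at most `(n-k)(m - k(k-1)/2)`. -/
theorem stmt_8 (n m d k : ℕ)
    (e : Fin m → Finset (Fin n))
    (he2 : ∀ j, (e j).card = 2)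
    (hinj : Function.Injective e)
    (hreg : ∀ v : Fin n, (Finset.univ.filter fun j => v ∈ e j).card = d)
    (W : Finset (Fin n)) (hW : W.card = k)
    (hclique : ∀ u ∈ W, ∀ v ∈ W, u ≠ v → ∃ j, e j = {u, v}) :
    (Finset.univ.filter fun j => e j ⊆ W).card = k * (k - 1) / 2 ∧
    (∑ i ∈ Finset.univ \ W,
        (((Finset.univ.filter fun j => e j ⊆ W) ∆
            (Finset.univ.filter fun j : Fin m => i ∉ e j)).card : ℤ))
      = ((n : ℤ) - (k : ℤ)) * ((m : ℤ) - (d : ℤ) - ((k * (k - 1) / 2 : ℕ) : ℤ)) ∧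
    (∑ i ∈ Finset.univ \ W,
        (((Finset.univ.filter fun j => e j ⊆ W) ∆
            (Finset.univ.filter fun j : Fin m => i ∉ e j)).card : ℤ))
      ≤ ((n : ℤ) - (k : ℤ)) * ((m : ℤ) - ((k * (k - 1) / 2 : ℕ) : ℤ)) := by
  have hQ : (Finset.univ.filter fun j => e j ⊆ W).card = k * (k - 1) / 2 := by
    have himg : (Finset.univ.filter fun j => e j ⊆ W).image e = W.powersetCard 2 := by
      ext s
      simp only [Finset.mem_image, Finset.mem_filter, Finset.mem_univ, true_and,
        Finset.mem_powersetCard]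
      constructor
      · rintro ⟨j, hj, rfl⟩
        exact ⟨hj, he2 j⟩
      · rintro ⟨hs, hc⟩
        obtain ⟨u, v, huv, rfl⟩ := Finset.card_eq_two.mp hc
        obtain ⟨j, hj⟩ := hclique u (hs (by simp)) v (hs (by simp)) huv
        exact ⟨j, by rw [hj]; exact hs, hj⟩
    rw [← Finset.card_image_of_injective _ hinj, himg, Finset.card_powersetCard, hW,
      Nat.choose_two_right]
  have hterm : ∀ i ∈ Finset.univ \ W,
      (((Finset.univ.filter fun j => e j ⊆ W) ∆
            (Finset.univ.filter fun j : Fin m => i ∉ e j)).card : ℤ)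
        = (m : ℤ) - (d : ℤ) - ((k * (k - 1) / 2 : ℕ) : ℤ) := by
    intro i hi
    have hiW : i ∉ W := by simpa using hi
    have hsub : (Finset.univ.filter fun j => e j ⊆ W) ⊆
        (Finset.univ.filter fun j : Fin m => i ∉ e j) := by
      intro j hj
      simp only [Finset.mem_filter, Finset.mem_univ, true_and] at hj ⊢
      exact fun h => hiW (hj h)
    have h1 := Finset.card_filter_add_card_filter_not (s := (Finset.univ : Finset (Fin m)))
      (fun j => i ∈ e j)
    rw [hreg, Finset.card_univ, Fintype.card_fin] at h1
    have h2 := Finset.card_sdiff_add_card_eq_card hsub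
    rw [symmDiff_of_le hsub]
    rw [hQ] at h2
    omega
  have hcard : ((Finset.univ \ W).card : ℤ) = (n : ℤ) - k := by
    have h := Finset.card_sdiff_add_card_eq_card (Finset.subset_univ W)
    rw [Finset.card_univ, Fintype.card_fin, hW] at h
    omega
  have hsum := Finset.sum_congr rfl hterm
  rw [Finset.sum_const, nsmul_eq_mul, hcard] at hsum
  refine ⟨hQ, hsum, ?_⟩
  rw [hsum]
  apply mul_le_mul_of_nonneg_left
  · omega
  · rw [← hcard]; positivity
end

section
/- Let G be a d-regular simple graph with vertex set {1,…,n} and edges e_1,…,e_m, and let k ≤ n. Identify candidates with edge indices and, for each vertex i ∈ {1,…,n}, define the vote S_i = { j ∈ {1,…,m} : i ∉ e_j }. Then G contains a clique of size k if and only if there exist a committee C* ⊆ {1,…,m} with |C*| = k(k−1)/2 and an index set I ⊆ {1,…,n} with |I| ≥ n−k such that Σ_{i∈I} |C* ∖ S_i| = 0. -/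
/-- `G` is a `d`-regular simple graph on vertices `Fin n`, given by its
list of distinct edges `e 1, …, e m`. Candidates are edge indices; the vote of vertex
`i` is `{j | i ∉ e j}`. Then `G` has a clique of size `k` iff there are a committee
`C` of size `k(k-1)/2` and an index set `I` of size at least `n - k` with
disapproval score `∑_{i ∈ I} |C \ S i| = 0`. -/
theorem stmt_9 (n m d k : ℕ) (hk : k ≤ n)
    (e : Fin m → Finset (Fin n))
    (he2 : ∀ j, (e j).card = 2)
    (hinj : Function.Injective e)
    (hreg : ∀ v : Fin n, (Finset.univ.filter fun j => v ∈ e j).card = d) :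
    (∃ W : Finset (Fin n), W.card = k ∧
        ∀ u ∈ W, ∀ v ∈ W, u ≠ v → ∃ j, e j = {u, v})
    ↔ ∃ (C : Finset (Fin m)) (I : Finset (Fin n)),
        C.card = k * (k - 1) / 2 ∧ n - k ≤ I.card ∧
        (∑ i ∈ I, (C \ (Finset.univ.filter fun j : Fin m => i ∉ e j)).card) = 0 := by
  classical
  rw [← Nat.choose_two_right]
  constructor
  · rintro ⟨W, hW, hcl⟩
    refine ⟨Finset.univ.filter fun j => e j ⊆ W, Wᶜ, ?_, ?_, ?_⟩
    · rw [← hW, ← Finset.card_powersetCard, ← Finset.card_image_of_injective _ hinj]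
      congr 1
      ext s
      simp only [Finset.mem_image, Finset.mem_filter, Finset.mem_univ, true_and,
        Finset.mem_powersetCard]
      constructor
      · rintro ⟨j, hj, rfl⟩
        exact ⟨hj, he2 j⟩
      · rintro ⟨hs, hc⟩
        obtain ⟨u, v, huv, rfl⟩ := Finset.card_eq_two.mp hc
        obtain ⟨j, hj⟩ := hcl u (hs (by simp)) v (hs (by simp)) huv
        exact ⟨j, hj ▸ hs, hj⟩
    · rw [Finset.card_compl, Fintype.card_fin, hW]
    · refine Finset.sum_eq_zero fun i hi => ?_
      rw [Finset.card_eq_zero, Finset.sdiff_eq_empty_iff_subset]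
      intro j hj
      simp only [Finset.mem_filter, Finset.mem_univ, true_and] at hj ⊢
      exact fun h => (Finset.mem_compl.mp hi) (hj h)
  · rintro ⟨C, I, hC, hI, hs⟩
    have hcard : (Iᶜ).card ≤ k := by
      rw [Finset.card_compl, Fintype.card_fin]; omega
    obtain ⟨W, hIW, hW⟩ := Finset.exists_superset_card_eq hcard (by simpa using hk)
    refine ⟨W, hW, fun u hu v hv huv => ?_⟩
    have hsub : C.image e ⊆ W.powersetCard 2 := by
      intro s hs'
      obtain ⟨j, hj, rfl⟩ := Finset.mem_image.mp hs'
      refine Finset.mem_powersetCard.mpr ⟨fun i hi => hIW ?_, he2 j⟩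
      rw [Finset.mem_compl]
      intro hiI
      have h0 := Finset.sum_eq_zero_iff.mp hs i hiI
      rw [Finset.card_eq_zero, Finset.sdiff_eq_empty_iff_subset] at h0
      exact (Finset.mem_filter.mp (h0 hj)).2 hi
    have heq := Finset.eq_of_subset_of_card_le hsub (by
      rw [Finset.card_powersetCard, Finset.card_image_of_injective _ hinj, hC, hW])
    have hmem : ({u, v} : Finset (Fin n)) ∈ W.powersetCard 2 := by
      refine Finset.mem_powersetCard.mpr ⟨?_, Finset.card_pair huv⟩
      intro x hx
      simp only [Finset.mem_insert, Finset.mem_singleton] at hx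
      rcases hx with rfl | rfl <;> assumption
    rw [← heq] at hmem
    obtain ⟨j, -, hj⟩ := Finset.mem_image.mp hmem
    exact ⟨j, hj⟩
end

section
/- Let G be a simple graph with vertex set {1,…,n} and edge set E, and let k satisfy 1 ≤ k ≤ n. The candidate set consists of one candidate c_e for each edge e ∈ E together with a disjoint set D of k(k−1)/2 dummy candidates. The votes (counted with multiplicity) are: for each vertex i ∈ {1,…,n}, the vote S_i = { c_e : i ∉ e }, together with n+2k votes each equal to D (so 2n+2k votes in total). Then G contains a clique of size k if and only if there exist a committee C* of size k(k−1) and a sub-multiset V* of the votes with |V*| ≥ 2n+k such that Σ_{S∈V*} (|C* ∖ S| − |C* ∩ S|) ≤ 0 (as integers). -/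
/-- The votes in the STATEMENT 10 construction: candidates are the edges of the graph
(`Fin m`) together with a disjoint set `D` of `k(k-1)/2` dummy candidates
(`Fin (k * (k - 1) / 2)`). For each vertex `i : Fin n` there is one vote
`S i = {c_e : i ∉ e}`, and there are `n + 2k` further votes each equal to `D`. -/
def stmt10Vote (n m k : ℕ) (e : Fin m → Finset (Fin n)) :
    Fin n ⊕ Fin (n + 2 * k) → Finset (Fin m ⊕ Fin (k * (k - 1) / 2))
  | Sum.inl i => (Finset.univ.filter fun j => i ∉ e j).map ⟨Sum.inl, Sum.inl_injective⟩
  | Sum.inr _ => Finset.univ.map ⟨Sum.inr, Sum.inr_injective⟩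

theorem score_inl (n m k : ℕ) (e : Fin m → Finset (Fin n)) (Q : Finset (Fin m))
    (D : Finset (Fin (k * (k - 1) / 2))) (i : Fin n) :
    (((Q.disjSum D \ stmt10Vote n m k e (Sum.inl i)).card : ℤ)
      - ((Q.disjSum D ∩ stmt10Vote n m k e (Sum.inl i)).card : ℤ))
      = (D.card : ℤ) - Q.card + 2 * (Q.filter fun j => i ∈ e j).card := by
  have h1 : Q.disjSum D \ stmt10Vote n m k e (Sum.inl i)
      = (Q.filter fun j => i ∈ e j).disjSum D := by
    ext x
    cases x <;> simp [stmt10Vote]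
  have h2 : Q.disjSum D ∩ stmt10Vote n m k e (Sum.inl i)
      = (Q.filter fun j => ¬ i ∈ e j).disjSum ∅ := by
    ext x
    cases x <;> simp [stmt10Vote]
  have h3 := Finset.card_filter_add_card_filter_not (s := Q) (fun j => i ∈ e j)
  rw [h1, h2, Finset.card_disjSum, Finset.card_disjSum, Finset.card_empty]
  omega

theorem score_inr (n m k : ℕ) (e : Fin m → Finset (Fin n)) (Q : Finset (Fin m))
    (D : Finset (Fin (k * (k - 1) / 2))) (i : Fin (n + 2 * k)) :
    (((Q.disjSum D \ stmt10Vote n m k e (Sum.inr i)).card : ℤ)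
      - ((Q.disjSum D ∩ stmt10Vote n m k e (Sum.inr i)).card : ℤ))
      = (Q.card : ℤ) - D.card := by
  have h1 : Q.disjSum D \ stmt10Vote n m k e (Sum.inr i) = Q.disjSum ∅ := by
    ext x
    cases x <;> simp [stmt10Vote]
  have h2 : Q.disjSum D ∩ stmt10Vote n m k e (Sum.inr i)
      = (∅ : Finset (Fin m)).disjSum D := by
    ext x
    cases x <;> simp [stmt10Vote]
  rw [h1, h2, Finset.card_disjSum, Finset.card_disjSum, Finset.card_empty, Finset.card_empty]
  simp

theorem score_sum (n m k : ℕ) (e : Fin m → Finset (Fin n)) (Q : Finset (Fin m))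
    (D : Finset (Fin (k * (k - 1) / 2))) (A : Finset (Fin n)) (B : Finset (Fin (n + 2 * k))) :
    (∑ x ∈ A.disjSum B, (((Q.disjSum D \ stmt10Vote n m k e x).card : ℤ)
      - ((Q.disjSum D ∩ stmt10Vote n m k e x).card : ℤ)))
      = ((B.card : ℤ) - A.card) * ((Q.card : ℤ) - D.card)
        + 2 * ∑ i ∈ A, ((Q.filter fun j => i ∈ e j).card : ℤ) := by
  rw [Finset.sum_disjSum]
  simp only [score_inl, score_inr]
  rw [Finset.sum_add_distrib, Finset.sum_const, Finset.sum_const, ← Finset.mul_sum]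
  simp only [nsmul_eq_mul]
  ring

/-- `G` is a simple graph on vertices `Fin n` given by its list of
distinct edges, and `1 ≤ k ≤ n`. With the election of `stmt10Vote` (in total
`2n + 2k` votes), `G` has a clique of size `k` iff there are a committee `C` of size
`k(k-1)` and a sub-multiset of the votes (an index set `I`) of size at least
`2n + k` whose net disapproval score `∑ (|C \ S| - |C ∩ S|)` is at most `0`. -/
theorem stmt_10 (n m k : ℕ) (hk1 : 1 ≤ k) (hkn : k ≤ n)
    (e : Fin m → Finset (Fin n))
    (he2 : ∀ j, (e j).card = 2)
    (hinj : Function.Injective e) :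
    (∃ W : Finset (Fin n), W.card = k ∧
        ∀ u ∈ W, ∀ v ∈ W, u ≠ v → ∃ j, e j = {u, v})
    ↔ ∃ (C : Finset (Fin m ⊕ Fin (k * (k - 1) / 2)))
        (I : Finset (Fin n ⊕ Fin (n + 2 * k))),
        C.card = k * (k - 1) ∧ 2 * n + k ≤ I.card ∧
        (∑ x ∈ I,
            (((C \ stmt10Vote n m k e x).card : ℤ)
              - ((C ∩ stmt10Vote n m k e x).card : ℤ))) ≤ 0 := by
  have ht : 2 * (k * (k - 1) / 2) = k * (k - 1) :=
    Nat.mul_div_cancel' (Nat.even_mul_pred_self k).two_dvd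
  constructor
  · rintro ⟨W, hW, hcl⟩
    have hQ : (Finset.univ.filter fun j => e j ⊆ W).card = k * (k - 1) / 2 := by
      rw [← Nat.choose_two_right, ← hW, ← Finset.card_powersetCard,
        ← Finset.card_image_of_injective _ hinj]
      congr 1
      ext s
      simp only [Finset.mem_image, Finset.mem_filter, Finset.mem_univ, true_and,
        Finset.mem_powersetCard]
      constructor
      · rintro ⟨j, hj, rfl⟩
        exact ⟨hj, he2 j⟩
      · rintro ⟨hs, h2⟩
        obtain ⟨u, v, huv, rfl⟩ := Finset.card_eq_two.1 h2
        obtain ⟨j, hj⟩ := hcl u (hs (by simp)) v (hs (by simp)) huv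
        exact ⟨j, by rw [hj]; exact hs, hj⟩
    refine ⟨(Finset.univ.filter fun j => e j ⊆ W).disjSum Finset.univ,
      Wᶜ.disjSum Finset.univ, ?_, ?_, ?_⟩
    · rw [Finset.card_disjSum, hQ, Finset.card_univ, Fintype.card_fin]
      omega
    · rw [Finset.card_disjSum, Finset.card_compl, hW, Finset.card_univ, Fintype.card_fin,
        Fintype.card_fin]
      omega
    · rw [score_sum, hQ, Finset.card_univ (α := Fin (k * (k - 1) / 2)), Fintype.card_fin,
        Finset.sum_eq_zero]
      · simp
      · intro i hi
        rw [Nat.cast_eq_zero, Finset.card_eq_zero, Finset.filter_eq_empty_iff]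
        intro j hj hij
        exact (Finset.mem_compl.1 hi) ((Finset.mem_filter.1 hj).2 hij)
  · rintro ⟨C, I, hC, hI, hs⟩
    rw [← Finset.toLeft_disjSum_toRight (u := C)] at hC hs
    rw [← Finset.toLeft_disjSum_toRight (u := I)] at hI hs
    generalize C.toLeft = Q at *
    generalize C.toRight = D at *
    generalize I.toLeft = A at *
    generalize I.toRight = B at *
    rw [score_sum] at hs
    rw [Finset.card_disjSum] at hC hI
    have hD : D.card ≤ k * (k - 1) / 2 := by simpa using Finset.card_le_univ D
    have hA : A.card ≤ n := by simpa using Finset.card_le_univ A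
    have hB : B.card ≤ n + 2 * k := by simpa using Finset.card_le_univ B
    have hsum : 0 ≤ ∑ i ∈ A, ((Q.filter fun j => i ∈ e j).card : ℤ) :=
      Finset.sum_nonneg fun i _ => by positivity
    have hr : 0 ≤ (Q.card : ℤ) - D.card := by omega
    have hba : 1 ≤ (B.card : ℤ) - A.card := by omega
    have hr0 : (Q.card : ℤ) - D.card = 0 := by nlinarith
    have hs0 : ∑ i ∈ A, ((Q.filter fun j => i ∈ e j).card : ℤ) = 0 := by
      rw [hr0] at hs
      linarith
    have hdeg := (Finset.sum_eq_zero_iff_of_nonneg (fun i _ => by positivity)).1 hs0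
    obtain ⟨W, hAW, hW⟩ := Finset.exists_superset_card_eq (s := Aᶜ) (n := k)
      (by rw [Finset.card_compl, Fintype.card_fin]; omega) (by simpa using hkn)
    refine ⟨W, hW, ?_⟩
    have hsub : Q.image e ⊆ W.powersetCard 2 := by
      intro s hs
      obtain ⟨j, hj, rfl⟩ := Finset.mem_image.1 hs
      refine Finset.mem_powersetCard.2 ⟨fun i hi => hAW (Finset.mem_compl.2 fun hiA => ?_), he2 j⟩
      have := hdeg i hiA
      rw [Nat.cast_eq_zero, Finset.card_eq_zero, Finset.filter_eq_empty_iff] at this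
      exact this hj hi
    have heq := Finset.eq_of_subset_of_card_le hsub (by
      rw [Finset.card_powersetCard, hW, Nat.choose_two_right,
        Finset.card_image_of_injective _ hinj]
      omega)
    intro u hu v hv huv
    have : ({u, v} : Finset (Fin n)) ∈ Q.image e := by
      rw [heq, Finset.mem_powersetCard]
      refine ⟨?_, Finset.card_pair huv⟩
      intro x hx
      simp only [Finset.mem_insert, Finset.mem_singleton] at hx
      rcases hx with rfl | rfl <;> assumption
    obtain ⟨j, _, hj⟩ := Finset.mem_image.1 this
    exact ⟨j, hj⟩
end

section
/- Let G be a d-regular simple graph with vertex set {1,…,n} and edges e_1,…,e_m, and let k ≤ n. Identify candidates with edge indices and, for each vertex i ∈ {1,…,n}, define the vote S_i = { j ∈ {1,…,m} : i ∈ e_j } (the edges incident to vertex i, so |S_i| = d). Then G contains a clique of size k if and only if there exist a committee C* ⊆ {1,…,m} whose complement {1,…,m} ∖ C* has exactly k(k−1)/2 elements and an index set I ⊆ {1,…,n} with |I| ≥ n−k such that Σ_{i∈I} |C* Δ S_i| ≤ (n−k)·(m − k(k−1)/2 − d) (as integers). -/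
open scoped symmDiff

open scoped symmDiff in
theorem aux_card {m : ℕ} (C S : Finset (Fin m)) :
    ((C ∆ S).card : ℤ) = (m : ℤ) - (Cᶜ.card : ℤ) - (S.card : ℤ) + 2 * ((S \ C).card : ℤ) := by
  have h1 : (C ∆ S).card = (C \ S).card + (S \ C).card := by
    rw [Finset.symmDiff_def, Finset.card_union_of_disjoint disjoint_sdiff_sdiff]
  have h2 := Finset.card_sdiff_add_card_inter C S
  have h3 := Finset.card_sdiff_add_card_inter S C
  have h4 := Finset.card_add_card_compl C
  rw [Finset.inter_comm] at h3
  simp only [Fintype.card_fin] at h4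
  omega

/-- `G` is a `d`-regular simple graph on vertices `Fin n`, given by its
list of distinct edges `e 1, …, e m`. Candidates are edge indices; the vote of vertex
`i` is the set of edges incident to `i`. Then `G` has a clique of size `k` iff there
are a committee `C` whose complement has exactly `k(k-1)/2` elements and an index set
`I` of size at least `n - k` with minisum score
`∑_{i ∈ I} |C ∆ S i| ≤ (n-k)(m - k(k-1)/2 - d)`. -/
theorem stmt_11 (n m d k : ℕ) (hk : k ≤ n)
    (e : Fin m → Finset (Fin n))
    (he2 : ∀ j, (e j).card = 2)
    (hinj : Function.Injective e)
    (hreg : ∀ v : Fin n, (Finset.univ.filter fun j => v ∈ e j).card = d) :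
    (∃ W : Finset (Fin n), W.card = k ∧
        ∀ u ∈ W, ∀ v ∈ W, u ≠ v → ∃ j, e j = {u, v})
    ↔ ∃ (C : Finset (Fin m)) (I : Finset (Fin n)),
        Cᶜ.card = k * (k - 1) / 2 ∧ n - k ≤ I.card ∧
        (∑ i ∈ I, ((C ∆ (Finset.univ.filter fun j : Fin m => i ∈ e j)).card : ℤ))
          ≤ ((n : ℤ) - (k : ℤ)) * ((m : ℤ) - ((k * (k - 1) / 2 : ℕ) : ℤ) - (d : ℤ)) := by
  constructor
  · rintro ⟨W, hW, hcl⟩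
    have him : (Finset.univ.filter fun j => e j ⊆ W).image e = W.powersetCard 2 := by
      ext s
      simp only [Finset.mem_image, Finset.mem_filter, Finset.mem_univ, true_and,
        Finset.mem_powersetCard]
      constructor
      · rintro ⟨j, hj, rfl⟩
        exact ⟨hj, he2 j⟩
      · rintro ⟨hs, h2⟩
        obtain ⟨u, v, huv, rfl⟩ := Finset.card_eq_two.1 h2
        obtain ⟨j, hj⟩ := hcl u (hs (by simp)) v (hs (by simp)) huv
        exact ⟨j, hj ▸ hs, hj⟩
    have hcard : (Finset.univ.filter fun j => e j ⊆ W).card = k * (k - 1) / 2 := by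
      rw [← Finset.card_image_of_injective _ hinj, him, Finset.card_powersetCard, hW,
        Nat.choose_two_right]
    refine ⟨(Finset.univ.filter fun j => e j ⊆ W)ᶜ, Wᶜ, ?_, ?_, ?_⟩
    · rw [compl_compl, hcard]
    · rw [Finset.card_compl, hW, Fintype.card_fin]
    · have hterm : ∀ i ∈ Wᶜ, (((Finset.univ.filter fun j => e j ⊆ W)ᶜ ∆
          (Finset.univ.filter fun j : Fin m => i ∈ e j)).card : ℤ) =
          (m : ℤ) - ((k * (k - 1) / 2 : ℕ) : ℤ) - (d : ℤ) := by
        intro i hi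
        rw [aux_card, compl_compl, hcard, hreg]
        have : (Finset.univ.filter fun j : Fin m => i ∈ e j) \
            (Finset.univ.filter fun j => e j ⊆ W)ᶜ = ∅ := by
          rw [Finset.sdiff_eq_empty_iff_subset]
          intro j hj
          simp only [Finset.mem_filter, Finset.mem_univ, true_and, Finset.mem_compl] at *
          exact fun h => hi (h hj)
        rw [this]
        simp
      rw [Finset.sum_congr rfl hterm, Finset.sum_const, Finset.card_compl, hW, Fintype.card_fin,
        nsmul_eq_mul, Nat.cast_sub hk]
  · rintro ⟨C, I, hC, hI, hsum⟩
    obtain ⟨J, hJI, hJ⟩ := Finset.exists_subset_card_eq hI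
    have hle := (Finset.sum_le_sum_of_subset_of_nonneg hJI
      (f := fun i => ((C ∆ (Finset.univ.filter fun j : Fin m => i ∈ e j)).card : ℤ))
      (fun i _ _ => Int.natCast_nonneg _)).trans hsum
    simp only [aux_card, hC, hreg] at hle
    rw [Finset.sum_add_distrib, Finset.sum_const, hJ, nsmul_eq_mul, Nat.cast_sub hk,
      ← Finset.mul_sum] at hle
    have hz : ∑ i ∈ J, (((Finset.univ.filter fun j : Fin m => i ∈ e j) \ C).card) = 0 := by
      zify
      have : (0 : ℤ) ≤ ∑ i ∈ J, (((Finset.univ.filter fun j : Fin m => i ∈ e j) \ C).card : ℤ) :=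
        Finset.sum_nonneg fun i _ => Int.natCast_nonneg _
      linarith
    rw [Finset.sum_eq_zero_iff] at hz
    have hW : (Jᶜ).card = k := by
      rw [Finset.card_compl, hJ, Fintype.card_fin]; omega
    have hsub : (Cᶜ).image e ⊆ (Jᶜ).powersetCard 2 := by
      intro s hs
      obtain ⟨j, hj, rfl⟩ := Finset.mem_image.1 hs
      rw [Finset.mem_powersetCard]
      refine ⟨fun i hi => ?_, he2 j⟩
      rw [Finset.mem_compl] at hj ⊢
      intro hiJ
      have h0 := hz i hiJ
      rw [Finset.card_eq_zero, Finset.sdiff_eq_empty_iff_subset] at h0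
      exact hj (h0 (by simpa using hi))
    have heq := Finset.eq_of_subset_of_card_le hsub (by
      rw [Finset.card_image_of_injective _ hinj, hC, Finset.card_powersetCard, hW,
        Nat.choose_two_right])
    refine ⟨Jᶜ, hW, fun u hu v hv huv => ?_⟩
    have : ({u, v} : Finset (Fin n)) ∈ (Cᶜ).image e := by
      rw [heq, Finset.mem_powersetCard]
      exact ⟨by intro x hx; simp only [Finset.mem_insert, Finset.mem_singleton] at hx
                rcases hx with rfl | rfl <;> assumption, Finset.card_pair huv⟩
    obtain ⟨j, _, hj⟩ := Finset.mem_image.1 this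
    exact ⟨j, hj⟩
end

section
/- Let G be a d-regular simple graph with vertex set {1,…,n} and edges e_1,…,e_m, and let k ≤ n. Identify candidates with edge indices and, for each vertex i ∈ {1,…,n}, define the vote S_i = { j ∈ {1,…,m} : i ∈ e_j } (the edges incident to vertex i, so |S_i| = d). Then G contains a clique of size k if and only if there exist a committee C* ⊆ {1,…,m} whose complement {1,…,m} ∖ C* has exactly k(k−1)/2 elements and an index set I ⊆ {1,…,n} with |I| ≥ n−k such that Σ_{i∈I} |C* ∖ S_i| ≤ (n−k)·(m − k(k−1)/2 − d) (as integers). -/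
/-- `G` is a `d`-regular simple graph on vertices `Fin n`, given by its
list of distinct edges `e 1, …, e m`. Candidates are edge indices; the vote of vertex
`i` is the set of edges incident to `i`. Then `G` has a clique of size `k` iff there
are a committee `C` whose complement has exactly `k(k-1)/2` elements and an index set
`I` of size at least `n - k` with disapproval score
`∑_{i ∈ I} |C \ S i| ≤ (n-k)(m - k(k-1)/2 - d)`. -/
theorem stmt_12 (n m d k : ℕ) (hk : k ≤ n)
    (e : Fin m → Finset (Fin n))
    (he2 : ∀ j, (e j).card = 2)
    (hinj : Function.Injective e)
    (hreg : ∀ v : Fin n, (Finset.univ.filter fun j => v ∈ e j).card = d) :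
    (∃ W : Finset (Fin n), W.card = k ∧
        ∀ u ∈ W, ∀ v ∈ W, u ≠ v → ∃ j, e j = {u, v})
    ↔ ∃ (C : Finset (Fin m)) (I : Finset (Fin n)),
        Cᶜ.card = k * (k - 1) / 2 ∧ n - k ≤ I.card ∧
        (∑ i ∈ I, ((C \ (Finset.univ.filter fun j : Fin m => i ∈ e j)).card : ℤ))
          ≤ ((n : ℤ) - (k : ℤ)) * ((m : ℤ) - ((k * (k - 1) / 2 : ℕ) : ℤ) - (d : ℤ)) := by
  classical
  have hsplit : ∀ (C : Finset (Fin m)) (i : Fin n), C.card + Cᶜ.card = m ∧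
      (C \ (Finset.univ.filter fun j : Fin m => i ∈ e j)).card + d
        = C.card + (Cᶜ ∩ (Finset.univ.filter fun j : Fin m => i ∈ e j)).card := by
    intro C i
    have h0 := Finset.card_add_card_compl C
    rw [Fintype.card_fin] at h0
    refine ⟨h0, ?_⟩
    set S := Finset.univ.filter fun j : Fin m => i ∈ e j with hS
    have h1 : S.card = d := hreg i
    have h2 := Finset.card_sdiff_add_card_inter C S
    have h3 := Finset.card_sdiff_add_card_inter S C
    have h4 : Cᶜ ∩ S = S \ C := by
      ext x; simp [and_comm]
    rw [h4]
    rw [Finset.inter_comm S C] at h3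
    omega
  constructor
  · rintro ⟨W, hW, hcl⟩
    have himg : (Finset.univ.filter fun j => e j ⊆ W).image e = Finset.powersetCard 2 W := by
      ext s
      simp only [Finset.mem_image, Finset.mem_filter, Finset.mem_univ, true_and,
        Finset.mem_powersetCard]
      constructor
      · rintro ⟨j, hj, rfl⟩
        exact ⟨hj, he2 j⟩
      · rintro ⟨hs, h2⟩
        obtain ⟨u, v, huv, rfl⟩ := Finset.card_eq_two.mp h2
        obtain ⟨j, hj⟩ := hcl u (hs (by simp)) v (hs (by simp)) huv
        exact ⟨j, hj ▸ hs, hj⟩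
    have hcard : (Finset.univ.filter fun j => e j ⊆ W).card = k * (k - 1) / 2 := by
      rw [← Finset.card_image_of_injective _ hinj, himg, Finset.card_powersetCard, hW,
        Nat.choose_two_right]
    refine ⟨(Finset.univ.filter fun j => e j ⊆ W)ᶜ, Wᶜ, ?_, ?_, ?_⟩
    · rw [compl_compl, hcard]
    · rw [Finset.card_compl, hW, Fintype.card_fin]
    · have hWc : ((Wᶜ.card : ℕ) : ℤ) = (n : ℤ) - k := by
        rw [Finset.card_compl, hW, Fintype.card_fin]; omega
      rw [← hWc, ← nsmul_eq_mul]
      apply Finset.sum_le_card_nsmul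
      intro i hi
      have h := hsplit (Finset.univ.filter fun j => e j ⊆ W)ᶜ i
      rw [compl_compl, hcard] at h
      have h0 : (Finset.univ.filter fun j => e j ⊆ W) ∩
          (Finset.univ.filter fun j : Fin m => i ∈ e j) = ∅ := by
        apply Finset.eq_empty_of_forall_notMem
        intro j hj
        simp only [Finset.mem_inter, Finset.mem_filter, Finset.mem_univ, true_and] at hj
        exact (Finset.mem_compl.mp hi) (hj.1 hj.2)
      rw [h0, Finset.card_empty] at h
      omega
  · rintro ⟨C, I, hC, hI, hsum⟩
    obtain ⟨J, hJI, hJ⟩ := Finset.exists_subset_card_eq hI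
    have hle := (Finset.sum_le_sum_of_subset_of_nonneg
      (f := fun i => ((C \ (Finset.univ.filter fun j : Fin m => i ∈ e j)).card : ℤ)) hJI
      (fun i _ _ => by positivity)).trans hsum
    have hJn : (n : ℤ) - k = (J.card : ℤ) := by omega
    have heq : ∀ i ∈ J, ((C \ (Finset.univ.filter fun j : Fin m => i ∈ e j)).card : ℤ)
        = ((m : ℤ) - ((k * (k - 1) / 2 : ℕ) : ℤ) - (d : ℤ))
          + ((Cᶜ ∩ (Finset.univ.filter fun j : Fin m => i ∈ e j)).card : ℤ) := by
      intro i _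
      have h := hsplit C i
      rw [hC] at h
      omega
    rw [Finset.sum_congr rfl heq, Finset.sum_add_distrib, Finset.sum_const, nsmul_eq_mul,
      hJn] at hle
    have hz : ∑ i ∈ J, (Cᶜ ∩ (Finset.univ.filter fun j : Fin m => i ∈ e j)).card = 0 := by
      have : (∑ i ∈ J, ((Cᶜ ∩ (Finset.univ.filter fun j : Fin m => i ∈ e j)).card : ℤ)) ≤ 0 := by
        linarith
      rw [← Nat.cast_sum] at this
      omega
    rw [Finset.sum_eq_zero_iff] at hz
    have hJc : Jᶜ.card = k := by
      rw [Finset.card_compl, hJ, Fintype.card_fin]; omega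
    have himg : Cᶜ.image e = Finset.powersetCard 2 Jᶜ := by
      apply Finset.eq_of_subset_of_card_le
      · intro s hs
        obtain ⟨j, hj, rfl⟩ := Finset.mem_image.mp hs
        rw [Finset.mem_powersetCard]
        refine ⟨fun i hi => ?_, he2 j⟩
        rw [Finset.mem_compl]
        intro hiJ
        have h := Finset.card_eq_zero.mp (hz i hiJ)
        have : j ∈ Cᶜ ∩ (Finset.univ.filter fun j : Fin m => i ∈ e j) := by
          rw [Finset.mem_inter]
          exact ⟨hj, by simpa using hi⟩
        rw [h] at this
        simp at this
      · rw [Finset.card_image_of_injective _ hinj, hC, Finset.card_powersetCard, hJc,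
          Nat.choose_two_right]
    refine ⟨Jᶜ, hJc, fun u hu v hv huv => ?_⟩
    have : ({u, v} : Finset (Fin n)) ∈ Cᶜ.image e := by
      rw [himg, Finset.mem_powersetCard]
      refine ⟨?_, Finset.card_pair huv⟩
      intro x hx
      rcases Finset.mem_insert.mp hx with rfl | hx
      · exact hu
      · rw [Finset.mem_singleton.mp hx]; exact hv
    obtain ⟨j, _, hj⟩ := Finset.mem_image.mp this
    exact ⟨j, hj⟩
end

section
/- Let C be a candidate set of size m, let V = (S_1,…,S_n) be a family of n votes (subsets of C), and let V′ be a sub-multiset of V of size r ≥ 1. For a candidate c, let app_V(c) denote the number of votes of V containing c and app_{V′}(c) the number of votes of V′ (with multiplicity) containing c. Let ε > 0 and suppose that |(n/r)·app_{V′}(c) − app_V(c)| ≤ εn for every candidate c ∈ C. Let m* ≤ m, let X be a size-m* committee minimizing Σ_{S∈V} |X Δ S| over all size-m* committees, and let X′ be a size-m* committee minimizing Σ_{S∈V′} |X′ Δ S| over all size-m* committees. Then Σ_{S∈V} |X′ Δ S| ≤ Σ_{S∈V} |X Δ S| + 4εn·|X′ ∖ X| (as real numbers). -/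
open scoped symmDiff

theorem score_multiset {m : ℕ} (M : Multiset (Finset (Fin m))) (Y : Finset (Fin m)) :
    (M.map fun T => (Y ∆ T).card).sum
      + 2 * ∑ c ∈ Y, Multiset.card (M.filter fun T => c ∈ T)
      = (M.map Finset.card).sum + Multiset.card M * Y.card := by
  induction M using Multiset.induction_on with
  | empty => simp
  | cons T M ih =>
    have h1 : ∑ c ∈ Y, Multiset.card ((T ::ₘ M).filter fun T => c ∈ T)
        = (Y ∩ T).card + ∑ c ∈ Y, Multiset.card (M.filter fun T => c ∈ T) := by
      rw [← Finset.filter_mem_eq_inter, Finset.card_filter, ← Finset.sum_add_distrib]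
      refine Finset.sum_congr rfl fun c _ => ?_
      by_cases h : c ∈ T <;> simp [h, add_comm]
    have h2 : (Y ∆ T).card + 2 * (Y ∩ T).card = T.card + Y.card := by
      have a : (Y ∆ T).card = (Y \ T).card + (T \ Y).card := by
        rw [symmDiff_def, Finset.sup_eq_union, Finset.card_union_of_disjoint]
        exact disjoint_sdiff_sdiff
      have b := Finset.card_sdiff_add_card_inter Y T
      have c := Finset.card_sdiff_add_card_inter T Y
      rw [Finset.inter_comm T Y] at c
      omega
    rw [h1]
    simp only [Multiset.map_cons, Multiset.sum_cons, Multiset.card_cons]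
    rw [add_mul, one_mul]
    omega

/-- `V` is a family of `n` votes over candidates `Fin m`, and `V'` is a
sub-multiset of `V` of size `r ≥ 1`. Suppose `|(n/r)·app_{V'}(c) − app_V(c)| ≤ ε n`
for every candidate `c`. If `X` is a size-`mstar` committee minimizing the minisum
score over `V` and `X'` is a size-`mstar` committee minimizing the minisum score over
`V'`, then `∑_{S ∈ V} |X' ∆ S| ≤ ∑_{S ∈ V} |X ∆ S| + 4εn·|X' \ X|`. -/
theorem stmt_15 (m n : ℕ) (V : Fin n → Finset (Fin m))
    (V' : Multiset (Finset (Fin m))) (hsub : V' ≤ Finset.univ.val.map V)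
    (r : ℕ) (hr : Multiset.card V' = r) (hr1 : 1 ≤ r)
    (ε : ℝ) (hε : 0 < ε)
    (happ : ∀ c : Fin m,
      |(n : ℝ) / (r : ℝ) * ((Multiset.card (V'.filter fun T => c ∈ T)) : ℝ)
          - (((Finset.univ.filter fun i => c ∈ V i).card : ℕ) : ℝ)| ≤ ε * n)
    (mstar : ℕ) (hm : mstar ≤ m)
    (X : Finset (Fin m)) (hX : X.card = mstar)
    (hXmin : ∀ Y : Finset (Fin m), Y.card = mstar →
      ∑ i, (X ∆ V i).card ≤ ∑ i, (Y ∆ V i).card)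
    (X' : Finset (Fin m)) (hX' : X'.card = mstar)
    (hX'min : ∀ Y : Finset (Fin m), Y.card = mstar →
      (V'.map fun T => (X' ∆ T).card).sum ≤ (V'.map fun T => (Y ∆ T).card).sum) :
    ((∑ i, (X' ∆ V i).card : ℕ) : ℝ) ≤
      ((∑ i, (X ∆ V i).card : ℕ) : ℝ) + 4 * ε * n * ((X' \ X).card : ℝ) := by
  have hs' := fun Y => score_multiset V' Y
  have hs : ∀ Y : Finset (Fin m), ∑ i, (Y ∆ V i).card
      + 2 * ∑ c ∈ Y, (Finset.univ.filter fun i => c ∈ V i).card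
      = ∑ i, (V i).card + n * Y.card := by
    intro Y
    have h := score_multiset (Finset.univ.val.map V) Y
    simp only [Multiset.map_map, Multiset.filter_map, Multiset.card_map, Function.comp_def] at h
    have hn : Multiset.card (Finset.univ : Finset (Fin n)).val = n := by
      rw [Finset.card_val, Finset.card_univ, Fintype.card_fin]
    rw [hn] at h
    exact h
  have hle : ∑ c ∈ X, Multiset.card (V'.filter fun T => c ∈ T)
      ≤ ∑ c ∈ X', Multiset.card (V'.filter fun T => c ∈ T) := by
    have a := hs' X
    have b := hs' X'
    have c := hX'min X hX
    rw [hX] at a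
    rw [hX'] at b
    omega
  have a := hs X
  have b := hs X'
  rw [hX] at a
  rw [hX'] at b
  have hd : (X \ X').card = (X' \ X).card := Finset.card_sdiff_comm (hX.trans hX'.symm)
  have hsplit : ∀ f : Fin m → ℝ, ∑ c ∈ X, f c - ∑ c ∈ X', f c
      = ∑ c ∈ X \ X', f c - ∑ c ∈ X' \ X, f c := by
    intro f
    have h1 := Finset.sum_inter_add_sum_sdiff X X' f
    have h2 := Finset.sum_inter_add_sum_sdiff X' X f
    rw [Finset.inter_comm X' X] at h2
    linarith
  have hleR : ∑ c ∈ X, (Multiset.card (V'.filter fun T => c ∈ T) : ℝ)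
      ≤ ∑ c ∈ X', (Multiset.card (V'.filter fun T => c ∈ T) : ℝ) := by exact_mod_cast hle
  have k1 : ∑ c ∈ X \ X', ((Finset.univ.filter fun i => c ∈ V i).card : ℝ)
      ≤ ∑ c ∈ X \ X', ((n : ℝ) / r * (Multiset.card (V'.filter fun T => c ∈ T) : ℝ) + ε * n) :=
    Finset.sum_le_sum fun c _ => by linarith [(abs_le.mp (happ c)).1]
  have k2 : ∑ c ∈ X' \ X, ((n : ℝ) / r * (Multiset.card (V'.filter fun T => c ∈ T) : ℝ))
      ≤ ∑ c ∈ X' \ X, (((Finset.univ.filter fun i => c ∈ V i).card : ℝ) + ε * n) :=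
    Finset.sum_le_sum fun c _ => by linarith [(abs_le.mp (happ c)).2]
  rw [Finset.sum_add_distrib, Finset.sum_const, nsmul_eq_mul] at k1 k2
  rw [hd, ← Finset.mul_sum] at k1
  rw [← Finset.mul_sum] at k2
  have s1 := hsplit fun c => (Multiset.card (V'.filter fun T => c ∈ T) : ℝ)
  have s2 := hsplit fun c => ((Finset.univ.filter fun i => c ∈ V i).card : ℝ)
  have k3 := mul_le_mul_of_nonneg_left
    (show ∑ c ∈ X \ X', (Multiset.card (V'.filter fun T => c ∈ T) : ℝ)
      ≤ ∑ c ∈ X' \ X, (Multiset.card (V'.filter fun T => c ∈ T) : ℝ) by linarith)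
    (show (0 : ℝ) ≤ (n : ℝ) / r by positivity)
  have aR := congrArg (Nat.cast : ℕ → ℝ) a
  have bR := congrArg (Nat.cast : ℕ → ℝ) b
  push_cast at aR bR ⊢
  linarith
end

section
/- Let C be a candidate set of size m, let V* be a family of n* votes (subsets of C), and let m* be a committee size with 2m* ≤ m. For a candidate c, let app(c) denote the number of votes of V* containing c. Let X ⊆ C with |X| = m* be a set of m* candidates with the largest approval counts, i.e., app(c′) ≤ app(c) for every c ∈ X and every c′ ∈ C ∖ X. Then Σ_{S∈V*} |X Δ S| ≤ (m − m*)·n*. -/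
open scoped symmDiff

/-- `V` is a family of `nstar` votes over a candidate set `Fin m`, and
`2·mstar ≤ m`. If `X` is a set of `mstar` candidates with the largest approval
counts, then the minisum score of `X` satisfies
`∑_{S ∈ V} |X ∆ S| ≤ (m − mstar)·nstar`. -/
theorem stmt_16 (m nstar mstar : ℕ) (h2m : 2 * mstar ≤ m)
    (V : Fin nstar → Finset (Fin m))
    (X : Finset (Fin m)) (hX : X.card = mstar)
    (htop : ∀ c ∈ X, ∀ c' ∉ X,
      (Finset.univ.filter fun i => c' ∈ V i).card ≤
        (Finset.univ.filter fun i => c ∈ V i).card) :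
    ∑ i, (X ∆ V i).card ≤ (m - mstar) * nstar := by
  classical
  have key : ∀ i, (X ∆ V i).card + (X.filter (fun c => c ∈ V i)).card
      = X.card + (Xᶜ.filter (fun c => c ∈ V i)).card := by
    intro i
    have h1 : X ∆ V i = X.filter (fun c => ¬ c ∈ V i) ∪ Xᶜ.filter (fun c => c ∈ V i) := by
      ext c
      simp only [Finset.mem_symmDiff, Finset.mem_union, Finset.mem_filter, Finset.mem_compl]
      tauto
    have h2 : Disjoint (X.filter (fun c => ¬ c ∈ V i)) (Xᶜ.filter (fun c => c ∈ V i)) := by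
      rw [Finset.disjoint_left]
      intro c
      simp only [Finset.mem_filter]
      tauto
    have h3 := Finset.card_filter_add_card_filter_not (s := X) (fun c => c ∈ V i)
    rw [h1, Finset.card_union_of_disjoint h2]
    omega
  have dc : ∀ Y : Finset (Fin m), ∑ i, (Y.filter (fun c => c ∈ V i)).card
      = ∑ c ∈ Y, (Finset.univ.filter fun i => c ∈ V i).card := by
    intro Y
    simp only [Finset.card_filter]
    exact Finset.sum_comm
  have hsum : ∑ i, (X ∆ V i).card + ∑ c ∈ X, (Finset.univ.filter fun i => c ∈ V i).card
      = nstar * mstar + ∑ c ∈ Xᶜ, (Finset.univ.filter fun i => c ∈ V i).card := by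
    rw [← dc, ← dc, ← Finset.sum_add_distrib, Finset.sum_congr rfl (fun i _ => key i),
      Finset.sum_add_distrib]
    simp [hX]
  have hle : ∀ c : Fin m, (Finset.univ.filter fun i => c ∈ V i).card ≤ nstar := by
    intro c
    simpa using Finset.card_le_univ (Finset.univ.filter fun i => c ∈ V i)
  obtain ⟨t, htn, ht1, ht2⟩ : ∃ t ≤ nstar,
      (∀ c ∈ X, t ≤ (Finset.univ.filter fun i => c ∈ V i).card) ∧
      (∀ c ∈ Xᶜ, (Finset.univ.filter fun i => c ∈ V i).card ≤ t) := by
    rcases X.eq_empty_or_nonempty with h | h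
    · exact ⟨nstar, le_rfl, by simp [h], fun c _ => hle c⟩
    · obtain ⟨c, hc, hmin⟩ := Finset.exists_min_image X
        (fun c => (Finset.univ.filter fun i => c ∈ V i).card) h
      exact ⟨_, hle c, hmin, fun c' hc' => htop c hc c' (Finset.mem_compl.1 hc')⟩
  have hA := Finset.card_nsmul_le_sum _ _ _ ht1
  have hB := Finset.sum_le_card_nsmul _ _ _ ht2
  rw [Finset.card_compl, Fintype.card_fin, hX] at hB
  rw [hX] at hA
  simp only [smul_eq_mul] at hA hB
  obtain ⟨d, rfl⟩ := Nat.exists_eq_add_of_le h2m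
  have e : 2 * mstar + d - mstar = mstar + d := by omega
  rw [e] at hB ⊢
  have := Nat.mul_le_mul_left d htn
  nlinarith
end
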